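/- Let G be a 4-connected plane triangulation with a proper 3-colouring into classes B, W, R, let v be a white vertex, and let n(v) be a red neighbour of v. Then the set (N(v) ∩ B) ∪ {v} induces a star in G with centre v, and the set N(v) \ {n(v)} induces a path in G; moreover the pair (induced path on N(v)\{n(v)}, induced star on (N(n'(v)) ∩ W) ∪ {n'(v)}) for an appropriate choice is disjoint when the relevant vertices are far apart. -/

import Mathlib

/-- A combinatorial plane triangulation: a simple graph together with its set of
triangular faces, each edge on exactly two faces, satisfying Euler's formula. -/
structure PlaneTriangulation (V : Type*) [Fintype V] [DecidableEq V] where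
  G : SimpleGraph V
  faces : Finset (Finset V)
  face_card : ∀ f ∈ faces, f.card = 3
  face_clique : ∀ f ∈ faces, ∀ a ∈ f, ∀ b ∈ f, a ≠ b → G.Adj a b
  edge_two_faces : ∀ a b : V, G.Adj a b → (faces.filter (fun f => a ∈ f ∧ b ∈ f)).card = 2
  euler : (Fintype.card V : ℤ) - (G.edgeSet.ncard : ℤ) + (faces.card : ℤ) = 2

/-- The degree of a vertex. -/
noncomputable def PlaneTriangulation.deg {V : Type*} [Fintype V] [DecidableEq V]
    (T : PlaneTriangulation V) (v : V) : ℕ := (T.G.neighborSet v).ncard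

/-- Membership in the family `E(4)`, witnessed by a proper `3`-colouring
`{B, W, R}` in which every red vertex has degree `4`. -/
def PlaneTriangulation.IsE4Coloring {V : Type*} [Fintype V] [DecidableEq V]
    (T : PlaneTriangulation V) (B W R : Set V) : Prop :=
  B ∪ W ∪ R = Set.univ ∧ Disjoint B W ∧ Disjoint B R ∧ Disjoint W R ∧
  (∀ a ∈ B, ∀ b ∈ B, ¬ T.G.Adj a b) ∧
  (∀ a ∈ W, ∀ b ∈ W, ¬ T.G.Adj a b) ∧
  (∀ a ∈ R, ∀ b ∈ R, ¬ T.G.Adj a b) ∧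
  (∀ v ∈ R, T.deg v = 4)

def FourConnected {V : Type*} [Fintype V] (G : SimpleGraph V) : Prop :=
  5 ≤ Fintype.card V ∧ ∀ S : Set V, S.ncard ≤ 3 → (G.induce Sᶜ).Connected

/-- A graph is a path graph: a nonempty tree in which every vertex has degree at most 2. -/
def IsPathGraph {α : Type*} (H : SimpleGraph α) : Prop :=
  H.IsTree ∧ ∀ u : α, (H.neighborSet u).ncard ≤ 2

/-- `S` induces a star in `G` with centre `v`: `v ∈ S`, `v` is adjacent to every
other vertex of `S`, and the remaining vertices are pairwise non-adjacent. -/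
def InducesStar {V : Type*} (G : SimpleGraph V) (S : Set V) (v : V) : Prop :=
  v ∈ S ∧ (∀ u ∈ S, u ≠ v → G.Adj v u) ∧
    ∀ u ∈ S, ∀ w ∈ S, u ≠ v → w ≠ v → ¬ G.Adj u w

/-- If every element of the kernel factors through `π : ι → κ`, its dimension is at most `|κ|`. -/
theorem finrank_ker_le_card_of_factor {ι κ M : Type*} [Fintype ι] [Fintype κ] [AddCommGroup M]
    [Module (ZMod 2) M] (f : (ι → ZMod 2) →ₗ[ZMod 2] M) (π : ι → κ)
    (hf : ∀ g, f g = 0 → ∃ h : κ → ZMod 2, g = h ∘ π) :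
    Module.finrank (ZMod 2) (LinearMap.ker f) ≤ Fintype.card κ := by
  have hle : LinearMap.ker f ≤ LinearMap.range (LinearMap.funLeft (ZMod 2) (ZMod 2) π) := by
    intro g hg
    obtain ⟨h, rfl⟩ := hf g hg
    exact ⟨h, rfl⟩
  calc _ ≤ _ := Submodule.finrank_mono hle
    _ ≤ _ := LinearMap.finrank_range_le _
    _ = _ := Module.finrank_fintype_fun_eq_card _

/-- Two vertices of a triangle determine the third. -/
theorem Finset.exists_third_of_card_eq_three {α : Type*} [DecidableEq α] {t : Finset α}
    (ht : t.card = 3) {a b : α} (ha : a ∈ t) (hb : b ∈ t) (hab : a ≠ b) :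
    ∃ c, c ≠ a ∧ c ≠ b ∧ t = {a, b, c} := by
  have hsub : ({a, b} : Finset α) ⊆ t := by
    intro x hx
    simp only [Finset.mem_insert, Finset.mem_singleton] at hx
    rcases hx with rfl | rfl <;> assumption
  have h2 : ({a, b} : Finset α).card = 2 := Finset.card_pair hab
  have h1 : (t \ {a, b}).card = 1 := by
    rw [Finset.card_sdiff_of_subset hsub]; omega
  obtain ⟨c, hc⟩ := Finset.card_eq_one.1 h1
  have hcm : c ∈ t \ {a, b} := by simp [hc]
  simp only [Finset.mem_sdiff, Finset.mem_insert, Finset.mem_singleton, not_or] at hcm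
  refine ⟨c, hcm.2.1, hcm.2.2, ?_⟩
  rw [← Finset.union_sdiff_of_subset hsub, hc]
  ext x
  simp

/-- A property passed along edges outside `S` holds throughout the complement of `S` if that
complement is connected and contains a vertex with the property. -/
theorem SimpleGraph.forall_of_connected_compl {V : Type*} {G : SimpleGraph V} {S : Set V}
    (h : (G.induce Sᶜ).Connected) (p : V → Prop) {x : V} (hxS : x ∉ S) (hx : p x)
    (hp : ∀ y z, y ∉ S → z ∉ S → G.Adj y z → p y → p z) : ∀ y, y ∉ S → p y := by
  intro y hy
  obtain ⟨w⟩ := h.preconnected ⟨x, hxS⟩ ⟨y, hy⟩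
  have key : ∀ {a b : ↥Sᶜ}, (G.induce Sᶜ).Walk a b → p a → p b := by
    intro a b w
    induction w with
    | nil => exact id
    | @cons a b _ hadj _ ih => exact fun ha => ih (hp a b a.2 b.2 hadj ha)
  exact key w hx

namespace PlaneTriangulation

variable {V : Type*} [Fintype V] [DecidableEq V] (T : PlaneTriangulation V)

/-- Two darts with a common tail are consecutive around it if they span a face. -/
def Consecutive (d e : T.G.Dart) : Prop :=
  d.fst = e.fst ∧ ({d.fst, d.snd, e.snd} : Finset V) ∈ T.faces

/-- The umbrellas: classes of darts under rotation about their tails. Several umbrellas may a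
priori share a tail. -/
def Umbrella : Type _ := Quot T.Consecutive

/-- The sheets: the strongly connected pieces of the surface, as classes of darts under rotation
and reversal. -/
def Sheet : Type _ := Quot fun d e : T.G.Dart => T.Consecutive d e ∨ e = d.symm

/-- The umbrella of a dart. -/
def umbrella (d : T.G.Dart) : T.Umbrella := Quot.mk _ d

/-- The sheet of a dart. -/
def sheet (d : T.G.Dart) : T.Sheet := Quot.mk _ d

/-- The sheet containing an umbrella. -/
def umbrellaSheet : T.Umbrella → T.Sheet := Quot.map id fun _ _ h => Or.inl h

/-- The tail shared by the darts of an umbrella. -/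
def umbrellaTail : T.Umbrella → V := Quot.lift (fun d => d.fst) fun _ _ h => h.1

variable {T}

theorem umbrella_eq {d e : T.G.Dart} (h : T.Consecutive d e) : T.umbrella d = T.umbrella e :=
  Quot.sound h

theorem sheet_eq {d e : T.G.Dart} (h : T.Consecutive d e) : T.sheet d = T.sheet e :=
  Quot.sound (Or.inl h)

theorem sheet_symm (d : T.G.Dart) : T.sheet d.symm = T.sheet d :=
  (Quot.sound (r := fun d e : T.G.Dart => T.Consecutive d e ∨ e = d.symm) (Or.inr rfl)).symm

variable (T)

instance : Finite T.G.Dart := Finite.of_injective _ SimpleGraph.Dart.toProd_injective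

noncomputable instance : Fintype T.G.Dart := Fintype.ofFinite _

instance : Finite T.Umbrella := inferInstanceAs (Finite (Quot _))

instance : Finite T.Sheet := inferInstanceAs (Finite (Quot _))

noncomputable instance : Fintype T.Umbrella := Fintype.ofFinite _

noncomputable instance : Fintype T.Sheet := Fintype.ofFinite _

noncomputable instance : Fintype T.G.edgeSet := Fintype.ofFinite _

/-- The edge underlying a dart. -/
def dartEdge (d : T.G.Dart) : T.G.edgeSet := ⟨d.edge, d.edge_mem⟩

open Classical in
/-- The incidence matrix modulo two between umbrellas and edges. -/
noncomputable def incidence : Matrix T.Umbrella T.G.edgeSet (ZMod 2) :=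
  Matrix.of fun x e => ∑ d : T.G.Dart, if T.dartEdge d = e ∧ T.umbrella d = x then 1 else 0

open Classical in
/-- The edges spanned by a vertex set, as a chain modulo two. -/
noncomputable def edgeChain (t : Finset V) (e : T.G.edgeSet) : ZMod 2 :=
  if ∀ a ∈ e.1, a ∈ t then 1 else 0

/-- The boundary matrix modulo two from faces to edges. -/
noncomputable def boundary : Matrix T.G.edgeSet T.faces (ZMod 2) :=
  Matrix.of fun e f => T.edgeChain f.1 e

open Classical in
theorem incidence_mulVec (z : T.G.edgeSet → ZMod 2) (x : T.Umbrella) :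
    (T.incidence.mulVec z) x =
      ∑ d : T.G.Dart, if T.umbrella d = x then z (T.dartEdge d) else 0 := by
  simp only [incidence, Matrix.mulVec, dotProduct, Matrix.of_apply, Finset.sum_mul]
  rw [Finset.sum_comm]
  refine Finset.sum_congr rfl fun d _ => ?_
  rw [Finset.sum_eq_single (T.dartEdge d)]
  · simp
  · intro e _ he
    simp [he.symm]
  · simp

theorem incidence_transpose_mulVec (g : T.Umbrella → ZMod 2) (d : T.G.Dart) :
    (T.incidence.transpose.mulVec g) (T.dartEdge d) =
      g (T.umbrella d) + g (T.umbrella d.symm) := by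
  classical
  simp only [incidence, Matrix.mulVec, dotProduct, Matrix.transpose_apply, Matrix.of_apply,
    Finset.sum_mul]
  rw [Finset.sum_comm]
  have key : ∀ d' : T.G.Dart, (∑ x, (if T.dartEdge d' = T.dartEdge d ∧ T.umbrella d' = x then
      (1 : ZMod 2) else 0) * g x) = if d' = d ∨ d' = d.symm then g (T.umbrella d') else 0 := by
    intro d'
    rw [Finset.sum_eq_single (T.umbrella d')]
    · simp [dartEdge, SimpleGraph.dart_edge_eq_iff]
    · intro x _ hx
      simp [hx.symm]
    · simp
  rw [Finset.sum_congr rfl fun d' _ => key d', ← Finset.sum_filter]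
  have : (Finset.univ.filter fun d' : T.G.Dart => d' = d ∨ d' = d.symm) = {d, d.symm} := by
    ext; simp
  rw [this, Finset.sum_pair d.symm_ne.symm]

theorem edgeChain_dartEdge (t : Finset V) (d : T.G.Dart) [Decidable (d.fst ∈ t ∧ d.snd ∈ t)] :
    T.edgeChain t (T.dartEdge d) = if d.fst ∈ t ∧ d.snd ∈ t then 1 else 0 := by
  have : (∀ a ∈ (T.dartEdge d).1, a ∈ t) ↔ d.fst ∈ t ∧ d.snd ∈ t := by
    exact Sym2.ball
  simp only [edgeChain, this]

/-- A triangle is a cycle, provided its corners do not join distinct umbrellas. -/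
theorem incidence_mulVec_edgeChain {t : Finset V} (ht : t.card = 3)
    (hadj : ∀ a ∈ t, ∀ b ∈ t, a ≠ b → T.G.Adj a b)
    (hcorner : ∀ d e : T.G.Dart, d.fst = e.fst → {d.fst, d.snd, e.snd} = t →
      T.umbrella d = T.umbrella e) :
    T.incidence.mulVec (T.edgeChain t) = 0 := by
  classical
  funext x
  rw [incidence_mulVec]
  simp only [edgeChain_dartEdge, Pi.zero_apply]
  simp only [← ite_and]
  rw [← Finset.sum_filter]
  have third : ∀ d ∈ Finset.univ.filter (fun d : T.G.Dart =>
      T.umbrella d = x ∧ d.fst ∈ t ∧ d.snd ∈ t), ∃ e : T.G.Dart, e.fst = d.fst ∧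
        e.snd ≠ d.snd ∧ {d.fst, d.snd, e.snd} = t := by
    intro d hd
    simp only [Finset.mem_filter, Finset.mem_univ, true_and] at hd
    obtain ⟨c, hca, hcb, hc⟩ := Finset.exists_third_of_card_eq_three ht hd.2.1 hd.2.2 d.adj.ne
    have hct : c ∈ t := by rw [hc]; simp
    exact ⟨⟨(d.fst, c), hadj _ hd.2.1 _ hct hca.symm⟩, rfl, hcb, hc.symm⟩
  choose g hg1 hg2 hg3 using third
  have gm : ∀ d hd, g d hd ∈ Finset.univ.filter (fun d : T.G.Dart =>
      T.umbrella d = x ∧ d.fst ∈ t ∧ d.snd ∈ t) := by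
    intro d hd
    have h1 := hg1 d hd
    have h3 := hg3 d hd
    have hu := hcorner d _ h1.symm h3
    simp only [Finset.mem_filter, Finset.mem_univ, true_and] at hd ⊢
    refine ⟨hu ▸ hd.1, h1 ▸ hd.2.1, ?_⟩
    exact h3 ▸ by simp
  refine Finset.sum_involution g (fun _ _ => by decide) (fun d hd _ h => hg2 d hd (by rw [h]))
    gm fun d hd => ?_
  have a1 := hg1 d hd
  have a2 := hg2 d hd
  have a3 := hg3 d hd
  have b1 := hg1 _ (gm d hd)
  have b2 := hg2 _ (gm d hd)
  have b3 := hg3 _ (gm d hd)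
  have hm : (g (g d hd) (gm d hd)).snd ∈ ({d.fst, d.snd, (g d hd).snd} : Finset V) := by
    rw [a3, ← b3]; simp
  have hne : (g (g d hd) (gm d hd)).snd ≠ d.fst := by
    rw [← a1, ← b1]; exact (g (g d hd) (gm d hd)).adj.ne'
  simp only [Finset.mem_insert, Finset.mem_singleton] at hm
  apply SimpleGraph.Dart.ext
  apply Prod.ext
  · exact b1.trans a1
  · rcases hm with h | h | h
    · exact absurd h hne
    · exact h
    · exact absurd h b2

theorem incidence_mul_boundary : T.incidence * T.boundary = 0 := by
  ext x f
  have h := T.incidence_mulVec_edgeChain (T.face_card f.1 f.2) (T.face_clique f.1 f.2)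
    fun d e hde hf => umbrella_eq ⟨hde, hf ▸ f.2⟩
  exact congrFun h x

/-- An edge lies on exactly two faces, and the boundary of a chain of faces at this edge is the
sum of the values at those faces. -/
theorem exists_two_faces (d : T.G.Dart) : ∃ f₁ f₂ : T.faces, f₁ ≠ f₂ ∧
    (∀ f : T.faces, (d.fst ∈ f.1 ∧ d.snd ∈ f.1) ↔ f = f₁ ∨ f = f₂) ∧
    ∀ s : T.faces → ZMod 2, (T.boundary.mulVec s) (T.dartEdge d) = s f₁ + s f₂ := by
  classical
  obtain ⟨f₁, f₂, hne, hf⟩ := Finset.card_eq_two.1 (T.edge_two_faces _ _ d.adj)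
  have hiff : ∀ f, (f ∈ T.faces ∧ d.fst ∈ f ∧ d.snd ∈ f) ↔ f = f₁ ∨ f = f₂ := by
    intro f
    simpa using Finset.ext_iff.1 hf f
  have h₁ := (hiff f₁).2 (Or.inl rfl)
  have h₂ := (hiff f₂).2 (Or.inr rfl)
  have hiff' : ∀ f : T.faces, (d.fst ∈ f.1 ∧ d.snd ∈ f.1) ↔
      f = ⟨f₁, h₁.1⟩ ∨ f = ⟨f₂, h₂.1⟩ := by
    intro f
    simpa [Subtype.ext_iff] using hiff f.1
  have hne' : (⟨f₁, h₁.1⟩ : T.faces) ≠ ⟨f₂, h₂.1⟩ := by simpa using hne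
  refine ⟨⟨f₁, h₁.1⟩, ⟨f₂, h₂.1⟩, hne', hiff', fun s => ?_⟩
  simp only [boundary, Matrix.mulVec, dotProduct, Matrix.of_apply, edgeChain_dartEdge, ite_mul,
    one_mul, zero_mul]
  rw [← Finset.sum_filter, ← Finset.sum_pair hne']
  congr 1
  ext f
  simpa using hiff' f

/-- A chain of faces without boundary is constant on sheets. -/
theorem exists_factor_of_boundary_eq_zero (D : T.faces → T.G.Dart)
    (hD : ∀ f, (D f).fst ∈ f.1 ∧ (D f).snd ∈ f.1) (s : T.faces → ZMod 2)
    (hs : T.boundary.mulVec s = 0) :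
    ∃ h : T.Sheet → ZMod 2, s = h ∘ fun f => T.sheet (D f) := by
  have hex : ∀ d : T.G.Dart, ∃ c, ∀ f : T.faces, d.fst ∈ f.1 → d.snd ∈ f.1 → s f = c := by
    intro d
    obtain ⟨f₁, f₂, -, hf, hb⟩ := T.exists_two_faces d
    refine ⟨s f₁, fun f h₁ h₂ => ?_⟩
    have h0 : s f₁ + s f₂ = 0 := by rw [← hb, hs]; rfl
    rcases (hf f).1 ⟨h₁, h₂⟩ with rfl | rfl
    · rfl
    · exact (CharTwo.add_eq_zero.1 h0).symm
  choose τ hτ using hex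
  refine ⟨Quot.lift τ ?_, ?_⟩
  · rintro d e (⟨h1, h2⟩ | rfl)
    · rw [← hτ d ⟨_, h2⟩ (by simp) (by simp), ← hτ e ⟨_, h2⟩ (by simp [h1]) (by simp)]
    · obtain ⟨f₁, f₂, -, hf, -⟩ := T.exists_two_faces d
      have := (hf f₁).2 (Or.inl rfl)
      rw [← hτ d f₁ this.1 this.2, ← hτ d.symm f₁ this.2 this.1]
  · funext f
    exact hτ _ f (hD f).1 (hD f).2

theorem exists_dart_mem_face (f : T.faces) :
    ∃ d : T.G.Dart, d.fst ∈ f.1 ∧ d.snd ∈ f.1 := by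
  obtain ⟨a, b, c, hab, -, -, hf⟩ := Finset.card_eq_three.1 (T.face_card f.1 f.2)
  have ha : a ∈ f.1 := by simp [hf]
  have hb : b ∈ f.1 := by simp [hf]
  exact ⟨⟨(a, b), T.face_clique f.1 f.2 a ha b hb hab⟩, ha, hb⟩

theorem card_faces_le_rank_boundary_add :
    T.faces.card ≤ T.boundary.rank + Fintype.card T.Sheet := by
  choose D hD using T.exists_dart_mem_face
  have h := finrank_ker_le_card_of_factor T.boundary.mulVecLin (fun f => T.sheet (D f))
    fun s hs => T.exists_factor_of_boundary_eq_zero D hD s hs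
  have h2 := T.boundary.mulVecLin.finrank_range_add_finrank_ker
  rw [Module.finrank_fintype_fun_eq_card, Fintype.card_coe] at h2
  rw [Matrix.rank]
  omega

theorem card_umbrella_le_rank_incidence_add :
    Fintype.card T.Umbrella ≤ T.incidence.rank + Fintype.card T.Sheet := by
  have h := finrank_ker_le_card_of_factor T.incidence.transpose.mulVecLin T.umbrellaSheet <| by
    intro g hg
    refine ⟨Quot.lift (fun d => g (T.umbrella d)) ?_, ?_⟩
    · rintro d e (h | rfl)
      · rw [umbrella_eq h]
      · have h0 : g (T.umbrella d) + g (T.umbrella d.symm) = 0 := by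
          rw [← incidence_transpose_mulVec]
          exact congrFun hg _
        exact CharTwo.add_eq_zero.1 h0
    · funext x
      induction x using Quot.ind
      rfl
  have h2 := T.incidence.transpose.mulVecLin.finrank_range_add_finrank_ker
  rw [Module.finrank_fintype_fun_eq_card] at h2
  rw [← Matrix.rank_transpose, Matrix.rank]
  omega

theorem card_add_card_faces :
    Fintype.card V + T.faces.card = Fintype.card T.G.edgeSet + 2 := by
  have h := T.euler
  rw [Set.ncard_eq_toFinset_card', Set.toFinset_card] at h
  omega

theorem card_umbrella_add_two_le :
    Fintype.card T.Umbrella + 2 ≤ Fintype.card V + 2 * Fintype.card T.Sheet := by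
  have h1 := T.card_faces_le_rank_boundary_add
  have h2 := T.card_umbrella_le_rank_incidence_add
  have h3 := Matrix.rank_add_rank_le_card_of_mul_eq_zero T.incidence_mul_boundary
  have h4 := T.card_add_card_faces
  omega

open Classical in
/-- The vertices of a sheet. -/
noncomputable def sheetVerts (i : T.Sheet) : Finset V :=
  Finset.univ.filter fun a => ∃ d : T.G.Dart, d.fst = a ∧ T.sheet d = i

variable {T}

theorem mem_sheetVerts {i : T.Sheet} {a : V} :
    a ∈ T.sheetVerts i ↔ ∃ d : T.G.Dart, d.fst = a ∧ T.sheet d = i := by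
  simp [sheetVerts]

variable (T)

theorem four_le_card_sheetVerts (i : T.Sheet) : 4 ≤ (T.sheetVerts i).card := by
  induction i using Quot.ind with | mk d => ?_
  have hface : ∀ f : T.faces, d.fst ∈ f.1 ∧ d.snd ∈ f.1 →
      ∃ c, c ≠ d.fst ∧ c ≠ d.snd ∧ f.1 = {d.fst, d.snd, c} ∧ c ∈ T.sheetVerts (T.sheet d) := by
    intro f hf
    obtain ⟨c, hca, hcb, hc⟩ :=
      Finset.exists_third_of_card_eq_three (T.face_card f.1 f.2) hf.1 hf.2 d.adj.ne
    let e : T.G.Dart := ⟨(d.fst, c), T.face_clique f.1 f.2 _ hf.1 _ (by simp [hc]) hca.symm⟩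
    have he : T.Consecutive d e := ⟨rfl, hc ▸ f.2⟩
    exact ⟨c, hca, hcb, hc, mem_sheetVerts.2 ⟨e.symm, rfl, by rw [sheet_symm, sheet_eq he]⟩⟩
  obtain ⟨f₁, f₂, hne, hf, -⟩ := T.exists_two_faces d
  obtain ⟨c₁, h1a, h1b, h1, h1m⟩ := hface f₁ ((hf f₁).2 (Or.inl rfl))
  obtain ⟨c₂, h2a, h2b, h2, h2m⟩ := hface f₂ ((hf f₂).2 (Or.inr rfl))
  have hc : c₁ ≠ c₂ := by
    rintro rfl
    exact hne (Subtype.ext (h1.trans h2.symm))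
  have hcard : ({d.fst, d.snd, c₁, c₂} : Finset V).card = 4 := by
    have := d.adj.ne
    grind
  rw [← hcard]
  refine Finset.card_le_card fun x hx => ?_
  simp only [Finset.mem_insert, Finset.mem_singleton] at hx
  rcases hx with rfl | rfl | rfl | rfl
  · exact mem_sheetVerts.2 ⟨d, rfl, rfl⟩
  · exact mem_sheetVerts.2 ⟨d.symm, rfl, sheet_symm d⟩
  · exact h1m
  · exact h2m

theorem sum_card_sheetVerts_le : ∑ i, (T.sheetVerts i).card ≤ Fintype.card T.Umbrella := by
  classical
  rw [← Finset.card_sigma]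
  refine Finset.card_le_card_of_surjOn (s := Finset.univ)
    (fun x => (⟨T.umbrellaSheet x, T.umbrellaTail x⟩ : Σ _ : T.Sheet, V)) ?_
  rintro ⟨i, a⟩ h
  simp only [Finset.coe_sigma, Finset.mem_coe, Set.mem_sigma_iff] at h
  obtain ⟨d, rfl, rfl⟩ := mem_sheetVerts.1 h.2
  exact ⟨T.umbrella d, by simp, rfl⟩

variable {T}

theorem exists_dart_fst_eq (h4 : FourConnected T.G) (a : V) : ∃ d : T.G.Dart, d.fst = a := by
  by_contra! hno
  have hconn := h4.2 ∅ (by simp)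
  have hall := SimpleGraph.forall_of_connected_compl hconn (fun y => y = a) (x := a) (by simp) rfl
    fun y z _ _ hyz hya => absurd hya (hno ⟨(y, z), hyz⟩)
  have : Fintype.card V ≤ 1 := Fintype.card_le_one_iff.2 fun y z => by
    rw [hall y (by simp), hall z (by simp)]
  have := h4.1
  omega

/-- Every sheet of a four-connected triangulation with several sheets meets the other sheets in at
least four vertices. -/
theorem four_le_card_shared (h4 : FourConnected T.G) {i j : T.Sheet} (hij : i ≠ j)
    {P : Finset V} (hP : ∀ a ∈ T.sheetVerts i, ∀ k ≠ i, a ∈ T.sheetVerts k → a ∈ P) :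
    4 ≤ P.card := by
  by_contra! hlt
  have hconn := h4.2 (P : Set V) (by rw [Set.ncard_coe_finset]; omega)
  obtain ⟨x, hx, hxP⟩ := Finset.exists_mem_notMem_of_card_lt_card
    (hlt.trans_le (T.four_le_card_sheetVerts i))
  obtain ⟨y, hy, hyP⟩ := Finset.exists_mem_notMem_of_card_lt_card
    (hlt.trans_le (T.four_le_card_sheetVerts j))
  have hall := SimpleGraph.forall_of_connected_compl hconn (fun a => a ∈ T.sheetVerts i) (x := x)
    (by simpa using hxP) hx <| by
      intro a b ha _ hab hai
      let d : T.G.Dart := ⟨(a, b), hab⟩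
      have hd : T.sheet d = i := by
        by_contra hne
        exact ha (hP a hai _ hne (mem_sheetVerts.2 ⟨d, rfl, rfl⟩))
      exact mem_sheetVerts.2 ⟨d.symm, rfl, by rw [sheet_symm, hd]⟩
  exact hyP (hP y (hall y (by simpa using hyP)) j hij.symm hy)

theorem card_sheet_eq_one (h4 : FourConnected T.G) : Fintype.card T.Sheet = 1 := by
  classical
  have hV : Nonempty V := Fintype.card_pos_iff.1 (by have := h4.1; omega)
  obtain ⟨d₀, -⟩ := exists_dart_fst_eq h4 hV.some
  have hpos : 0 < Fintype.card T.Sheet := Fintype.card_pos_iff.2 ⟨T.sheet d₀⟩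
  by_contra hne
  have hnt : Nontrivial T.Sheet := Fintype.one_lt_card_iff_nontrivial.1 (by omega)
  let c : V → ℕ := fun a => (Finset.univ.filter fun i => a ∈ T.sheetVerts i).card
  let P : T.Sheet → Finset V := fun i => (T.sheetVerts i).filter fun a => 2 ≤ c a
  have hP : ∀ i, 4 ≤ (P i).card := by
    intro i
    obtain ⟨j, hj⟩ := exists_ne i
    refine four_le_card_shared h4 hj.symm fun a ha k hk hak => Finset.mem_filter.2 ⟨ha, ?_⟩
    exact Finset.one_lt_card.2 ⟨i, by simpa using ha, k, by simpa using hak, hk.symm⟩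
  have hc : ∀ a, 1 ≤ c a := by
    intro a
    obtain ⟨d, rfl⟩ := exists_dart_fst_eq h4 a
    exact Finset.card_pos.2 ⟨T.sheet d, by simpa using mem_sheetVerts.2 ⟨d, rfl, rfl⟩⟩
  have hsum : ∑ i, (T.sheetVerts i).card = ∑ a, c a := by
    simp only [c, Finset.card_filter]
    rw [Finset.sum_comm]
    simp
  have hsumP : ∑ i, (P i).card = ∑ a, if 2 ≤ c a then c a else 0 := by
    have h1 : ∀ i, (P i).card =
        ∑ a, if 2 ≤ c a then (if a ∈ T.sheetVerts i then 1 else 0) else 0 := by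
      intro i
      simp only [← ite_and]
      rw [← Finset.card_filter]
      congr 1
      ext a
      simp [P, and_comm]
    simp only [h1]
    rw [Finset.sum_comm]
    refine Finset.sum_congr rfl fun a _ => ?_
    split_ifs
    · simp only [c, Finset.card_filter]
    · simp
  have h1 : 4 * Fintype.card T.Sheet ≤ ∑ i, (P i).card := by
    have := Finset.card_nsmul_le_sum Finset.univ (fun i => (P i).card) 4 fun i _ => hP i
    simpa [mul_comm] using this
  have h2 : (∑ i, (P i).card) + 2 * Fintype.card V ≤ 2 * ∑ a, c a := by
    have hV2 : 2 * Fintype.card V = ∑ _a : V, 2 := by simp [mul_comm]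
    rw [hsumP, hV2, ← Finset.sum_add_distrib, Finset.mul_sum]
    refine Finset.sum_le_sum fun a _ => ?_
    have := hc a
    split_ifs <;> omega
  have h3 := T.card_umbrella_add_two_le
  have h4 := T.sum_card_sheetVerts_le
  omega

theorem umbrellaTail_surjective (h4 : FourConnected T.G) :
    Function.Surjective T.umbrellaTail := by
  intro a
  obtain ⟨d, rfl⟩ := exists_dart_fst_eq h4 a
  exact ⟨T.umbrella d, rfl⟩

theorem card_umbrella_eq (h4 : FourConnected T.G) :
    Fintype.card T.Umbrella = Fintype.card V := by
  have h1 := T.card_umbrella_add_two_le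
  have h2 := card_sheet_eq_one h4
  have h3 := Fintype.card_le_of_surjective _ (umbrellaTail_surjective h4)
  omega

/-- There is a single umbrella at each vertex of a four-connected triangulation. -/
theorem umbrella_eq_of_fst_eq (h4 : FourConnected T.G) {d e : T.G.Dart} (h : d.fst = e.fst) :
    T.umbrella d = T.umbrella e :=
  ((Fintype.bijective_iff_surjective_and_card _).2
    ⟨umbrellaTail_surjective h4, card_umbrella_eq h4⟩).1 h

/-- A four-connected triangulation has no homology modulo two in dimension one. -/
theorem exists_boundary_eq (h4 : FourConnected T.G) {z : T.G.edgeSet → ZMod 2}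
    (hz : T.incidence.mulVec z = 0) : ∃ s, T.boundary.mulVec s = z := by
  have hle : LinearMap.range T.boundary.mulVecLin ≤ LinearMap.ker T.incidence.mulVecLin := by
    rintro _ ⟨s, rfl⟩
    simp [incidence_mul_boundary]
  have h1 := T.card_faces_le_rank_boundary_add
  have h2 := T.card_umbrella_le_rank_incidence_add
  have h3 := T.incidence.mulVecLin.finrank_range_add_finrank_ker
  have h5 := T.card_add_card_faces
  have h6 := card_umbrella_eq h4
  have h7 := card_sheet_eq_one h4
  rw [Module.finrank_fintype_fun_eq_card] at h3
  rw [Matrix.rank] at h1 h2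
  have heq := Submodule.eq_of_le_of_finrank_le hle (by omega)
  have hzm : z ∈ LinearMap.ker T.incidence.mulVecLin := hz
  rw [← heq] at hzm
  exact hzm

/-- A function on darts that is invariant under rotation about a vertex `a` is constant at `a`. -/
theorem eq_of_forall_consecutive (h4 : FourConnected T.G) {α : Type*} (τ : T.G.Dart → α) (a : V)
    (hτ : ∀ d e, d.fst = a → T.Consecutive d e → τ d = τ e) {d e : T.G.Dart} (hd : d.fst = a)
    (he : e.fst = a) : τ d = τ e := by
  classical
  let σ : T.Umbrella → Option α := Quot.lift (fun d => if d.fst = a then some (τ d) else none) <| by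
    intro d e h
    by_cases hda : d.fst = a
    · simp [hda, h.1 ▸ hda, hτ d e hda h]
    · simp [hda, h.1 ▸ hda]
  have h : σ (T.umbrella d) = σ (T.umbrella e) := by
    rw [umbrella_eq_of_fst_eq h4 (hd.trans he.symm)]
  simpa [σ, umbrella, hd, he] using h

/-- Every triangle of a four-connected triangulation is a face. -/
theorem mem_faces_of_triangle (h4 : FourConnected T.G) {a b c : V} (hab : T.G.Adj a b)
    (hac : T.G.Adj a c) (hbc : T.G.Adj b c) : ({a, b, c} : Finset V) ∈ T.faces := by
  set t : Finset V := {a, b, c} with ht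
  have hcard : t.card = 3 := Finset.card_eq_three.2 ⟨a, b, c, hab.ne, hac.ne, hbc.ne, rfl⟩
  have hclique : ∀ x ∈ t, ∀ y ∈ t, x ≠ y → T.G.Adj x y := by
    intro x hx y hy hxy
    simp only [ht, Finset.mem_insert, Finset.mem_singleton] at hx hy
    rcases hx with rfl | rfl | rfl <;> rcases hy with rfl | rfl | rfl <;>
      first | exact absurd rfl hxy | assumption | (apply SimpleGraph.Adj.symm; assumption)
  obtain ⟨s, hs⟩ := exists_boundary_eq h4 (T.incidence_mulVec_edgeChain hcard hclique
    fun d e hde _ => umbrella_eq_of_fst_eq h4 hde)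
  have hex : ∀ d : T.G.Dart, ∃ c, d.fst ∉ t ∨ d.snd ∉ t →
      ∀ f : T.faces, d.fst ∈ f.1 → d.snd ∈ f.1 → s f = c := by
    classical
    intro d
    obtain ⟨f₁, f₂, -, hf, hb⟩ := T.exists_two_faces d
    refine ⟨s f₁, fun hdt f h₁ h₂ => ?_⟩
    have h0 : s f₁ + s f₂ = 0 := by
      rw [← hb, hs, edgeChain_dartEdge, if_neg (by tauto)]
    rcases (hf f).1 ⟨h₁, h₂⟩ with rfl | rfl
    · rfl
    · exact (CharTwo.add_eq_zero.1 h0).symm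
  choose τ hτ using hex
  have hrot : ∀ x ∉ t, ∀ d e : T.G.Dart, d.fst = x → e.fst = x → τ d = τ e := by
    intro x hx d e hd he
    refine eq_of_forall_consecutive h4 τ x (fun d e hd h => ?_) hd he
    have hdt : d.fst ∉ t := hd ▸ hx
    have het : e.fst ∉ t := h.1 ▸ hdt
    rw [← hτ d (Or.inl hdt) ⟨_, h.2⟩ (by simp) (by simp),
      ← hτ e (Or.inl het) ⟨_, h.2⟩ (by simp [h.1]) (by simp)]
  have hsymm : ∀ d : T.G.Dart, d.fst ∉ t → τ d = τ d.symm := by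
    intro d hd
    obtain ⟨f₁, f₂, -, hf, -⟩ := T.exists_two_faces d
    have := (hf f₁).2 (Or.inl rfl)
    rw [← hτ d (Or.inl hd) f₁ this.1 this.2, ← hτ d.symm (Or.inr hd) f₁ this.2 this.1]
  have hconst : ∃ k, ∀ x ∉ t, ∀ d : T.G.Dart, d.fst = x → τ d = k := by
    obtain ⟨x, -, hx⟩ := Finset.exists_mem_notMem_of_card_lt_card (s := t) (t := Finset.univ)
      (by have := h4.1; rw [Finset.card_univ]; omega)
    obtain ⟨d₀, hd₀⟩ := exists_dart_fst_eq h4 x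
    refine ⟨τ d₀, SimpleGraph.forall_of_connected_compl
      (h4.2 (t : Set V) (by rw [Set.ncard_coe_finset, hcard]))
      (fun x => ∀ d : T.G.Dart, d.fst = x → τ d = τ d₀) (x := x) (by simpa using hx)
      (fun d hd => hrot x hx d d₀ hd hd₀) ?_⟩
    intro y z hy hz hyz ih d hd
    let e : T.G.Dart := ⟨(y, z), hyz⟩
    rw [← ih e rfl, hsymm e (by simpa using hy)]
    exact hrot z (by simpa using hz) _ _ hd rfl
  obtain ⟨k, hk⟩ := hconst
  have houter : ∀ f : T.faces, f.1 ≠ t → s f = k := by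
    intro f hf
    have hnot : ¬ f.1 ⊆ t := fun hsub =>
      hf (Finset.eq_of_subset_of_card_le hsub (by rw [hcard, T.face_card f.1 f.2]))
    obtain ⟨x, hxf, hxt⟩ := Finset.not_subset.1 hnot
    obtain ⟨y, hyf, hyx⟩ := Finset.exists_mem_ne (by rw [T.face_card f.1 f.2]; omega) x
    let d : T.G.Dart := ⟨(x, y), T.face_clique f.1 f.2 x hxf y hyf hyx.symm⟩
    rw [← hk x hxt d rfl]
    exact hτ d (Or.inl hxt) f hxf hyf
  let d : T.G.Dart := ⟨(a, b), hab⟩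
  obtain ⟨f₁, f₂, -, -, hb⟩ := T.exists_two_faces d
  have h1 : s f₁ + s f₂ = 1 := by
    classical
    rw [← hb, hs, edgeChain_dartEdge, if_pos (by simp [d, ht])]
  by_contra hmem
  rw [houter f₁ fun h => hmem (h ▸ f₁.2), houter f₂ fun h => hmem (h ▸ f₂.2),
    CharTwo.add_self_eq_zero] at h1
  exact zero_ne_one h1

/-- The neighbourhood of a vertex of a four-connected triangulation induces a connected graph. -/
theorem connected_link (h4 : FourConnected T.G) {v : V} (x : T.G.neighborSet v) :
    (T.G.induce (T.G.neighborSet v)).Connected := by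
  refine (SimpleGraph.connected_iff_exists_forall_reachable _).2 ⟨x, fun y => ?_⟩
  let τ : T.G.Dart → Prop := fun d =>
    ∃ h : d.snd ∈ T.G.neighborSet v, (T.G.induce (T.G.neighborSet v)).Reachable x ⟨d.snd, h⟩
  have step : ∀ d e : T.G.Dart, d.fst = v → e.fst = v →
      ({v, d.snd, e.snd} : Finset V) ∈ T.faces → τ d → τ e := by
    rintro d e hd he hf ⟨h, hr⟩
    have hev : T.G.Adj v e.snd := he ▸ e.adj
    refine ⟨hev, ?_⟩
    by_cases hde : d.snd = e.snd
    · simpa only [hde] using hr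
    · have hadj : (T.G.induce (T.G.neighborSet v)).Adj ⟨d.snd, h⟩ ⟨e.snd, hev⟩ :=
        T.face_clique _ hf _ (by simp) _ (by simp) hde
      exact hr.trans hadj.reachable
  have hτ : τ ⟨(v, x), x.2⟩ = τ ⟨(v, y), y.2⟩ := by
    refine eq_of_forall_consecutive h4 τ v (fun d e hd h => propext ⟨?_, ?_⟩) rfl rfl
    · exact step d e hd (h.1 ▸ hd) (hd ▸ h.2)
    · refine step e d (h.1 ▸ hd) hd ?_
      rw [Finset.pair_comm]
      exact hd ▸ h.2
  exact (hτ.mp ⟨x.2, SimpleGraph.Reachable.refl _⟩).2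

/-- The neighbourhood of a vertex of a four-connected triangulation induces a 2-regular graph. -/
theorem ncard_neighborSet_link (h4 : FourConnected T.G) (v : V) (a : T.G.neighborSet v) :
    ((T.G.induce (T.G.neighborSet v)).neighborSet a).ncard = 2 := by
  let d : T.G.Dart := ⟨(v, a), a.2⟩
  obtain ⟨f₁, f₂, hne, hf, -⟩ := T.exists_two_faces d
  have hthird : ∀ f : T.faces, v ∈ f.1 ∧ a.1 ∈ f.1 →
      ∃ c : T.G.neighborSet v, T.G.Adj a c ∧ f.1 = {v, a.1, c.1} := by
    intro f hf
    obtain ⟨c, hcv, hca, hc⟩ :=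
      Finset.exists_third_of_card_eq_three (T.face_card f.1 f.2) hf.1 hf.2 d.adj.ne
    have hcf : c ∈ f.1 := by simp [hc]
    exact ⟨⟨c, T.face_clique f.1 f.2 _ hf.1 _ hcf hcv.symm⟩,
      T.face_clique f.1 f.2 _ hf.2 _ hcf hca.symm, hc⟩
  obtain ⟨c₁, h1a, h1⟩ := hthird f₁ ((hf f₁).2 (Or.inl rfl))
  obtain ⟨c₂, h2a, h2⟩ := hthird f₂ ((hf f₂).2 (Or.inr rfl))
  have hc : c₁ ≠ c₂ := by
    rintro rfl
    exact hne (Subtype.ext (h1.trans h2.symm))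
  have huniq : ∀ w c : T.G.neighborSet v, T.G.Adj a w →
      ({v, a.1, w.1} : Finset V) = {v, a.1, c.1} → w = c := by
    intro w c haw h
    have hw : w.1 ∈ ({v, a.1, c.1} : Finset V) := h ▸ by simp
    simp only [Finset.mem_insert, Finset.mem_singleton] at hw
    rcases hw with hw | hw | hw
    · exact absurd hw (SimpleGraph.Adj.ne' w.2)
    · exact absurd hw haw.ne'
    · exact Subtype.ext hw
  rw [Set.ncard_eq_two]
  refine ⟨c₁, c₂, hc, Set.ext fun w => ?_⟩
  simp only [SimpleGraph.mem_neighborSet, SimpleGraph.comap_adj, Function.Embedding.subtype_apply,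
    Set.mem_insert_iff, Set.mem_singleton_iff]
  constructor
  · intro haw
    have hmem := mem_faces_of_triangle h4 a.2 w.2 haw
    rcases (hf ⟨_, hmem⟩).1 ⟨by simp [d], by simp [d]⟩ with h | h
    · exact Or.inl (huniq w c₁ haw (by rw [← h1, ← h]))
    · exact Or.inr (huniq w c₂ haw (by rw [← h2, ← h]))
  · rintro (rfl | rfl) <;> assumption

end PlaneTriangulation

theorem IsPathGraph.of_iso {α β : Type*} {H : SimpleGraph α} {K : SimpleGraph β}
    (hH : IsPathGraph H) (e : H ≃g K) : IsPathGraph K := by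
  refine ⟨e.isTree_iff.1 hH.1, fun u => ?_⟩
  have h := hH.2 (e.symm u)
  rwa [← Set.ncard_congr' (e.symm.mapNeighborSet u)] at h

/-- Removing a vertex from an induced subgraph, in one step or in two. -/
def SimpleGraph.induceDiffSingletonIso {α : Type*} (G : SimpleGraph α) {s : Set α} {a : α}
    (ha : a ∈ s) :
    (G.induce s).induce {(⟨a, ha⟩ : s)}ᶜ ≃g G.induce (s \ {a}) where
  toFun x := ⟨x.1.1, x.1.2, fun h => x.2 (Subtype.ext h)⟩
  invFun x := ⟨⟨x.1, x.2.1⟩, fun h => x.2.2 (congrArg Subtype.val h)⟩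
  map_rel_iff' := Iff.rfl

/-- A cycle graph minus a vertex is a path graph. -/
theorem isPathGraph_induce_compl_singleton {α : Type*} [Finite α] {H : SimpleGraph α}
    (hconn : H.Connected) (h2 : ∀ a, (H.neighborSet a).ncard = 2) (n : α) :
    IsPathGraph (H.induce {n}ᶜ) := by
  classical
  have := Fintype.ofFinite α
  have hdeg : ∀ a, H.degree a = 2 := fun a => by
    rw [← h2 a, Set.ncard_eq_toFinset_card', Set.toFinset_card,
      SimpleGraph.card_neighborSet_eq_degree]
  obtain ⟨x, y, hxy, hN⟩ := Set.ncard_eq_two.1 (h2 n)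
  have hadj : ∀ w, H.Adj n w ↔ w = x ∨ w = y := fun w => by
    rw [← SimpleGraph.mem_neighborSet, hN]; rfl
  have hnx : H.Adj n x := (hadj x).2 (Or.inl rfl)
  have hcyc : H.IsCycles := fun a _ => h2 a
  have hconn' : (H.deleteEdges {s(n, x)}).Connected :=
    hconn.connected_delete_edge_of_not_isBridge
      (by rw [SimpleGraph.isBridge_iff, not_not]; exact hcyc.reachable_deleteEdges hnx)
  have hcardE : Nat.card H.edgeSet = Nat.card α := by
    have h := H.sum_degrees_eq_twice_card_edges
    simp only [hdeg, Finset.sum_const, Finset.card_univ, smul_eq_mul] at h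
    rw [Nat.card_eq_fintype_card, Nat.card_eq_fintype_card, ← SimpleGraph.edgeFinset_card]
    omega
  have htree : (H.deleteEdges {s(n, x)}).IsTree := by
    refine SimpleGraph.isTree_iff_connected_and_card.2 ⟨hconn', ?_⟩
    rw [Nat.card_coe_set_eq, SimpleGraph.edgeSet_deleteEdges,
      Set.ncard_sdiff_singleton_add_one (by simpa using hnx), ← Nat.card_coe_set_eq, hcardE]
  have hleaf : (H.deleteEdges {s(n, x)}).degree n = 1 := by
    refine SimpleGraph.degree_eq_one_iff_existsUnique_adj.2 ⟨y, ?_, ?_⟩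
    · have := hxy.symm
      simp_all [SimpleGraph.deleteEdges_adj]
    · intro w hw
      simp only [SimpleGraph.deleteEdges_adj, Set.mem_singleton_iff] at hw
      rcases (hadj w).1 hw.1 with rfl | rfl
      · exact absurd rfl hw.2
      · rfl
  have hinduce : (H.deleteEdges {s(n, x)}).induce {n}ᶜ = H.induce {n}ᶜ := by
    ext a b
    have ha : a.1 ≠ n := a.2
    have hb : b.1 ≠ n := b.2
    simp [SimpleGraph.deleteEdges_adj, ha, hb]
  refine ⟨?_, fun u => ?_⟩
  · rw [← hinduce]
    exact ⟨hconn'.induce_compl_singleton_of_degree_eq_one hleaf, htree.isAcyclic.induce _⟩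
  · rw [← h2 u.1]
    exact Set.ncard_le_ncard_of_injOn Subtype.val (fun _ h => h) Subtype.val_injective.injOn

/-- In a 4-connected plane triangulation with proper 3-colouring `{B, W, R}`, for a
white vertex `v` with a red neighbour `n`, the set `(N(v) ∩ B) ∪ {v}` induces a star
with centre `v`, and the set `N(v) \ {n}` induces a path. -/
theorem stmt15 {V : Type*} [Fintype V] [DecidableEq V] (T : PlaneTriangulation V)
    (B W R : Set V)
    (hPart : B ∪ W ∪ R = Set.univ)
    (hBW : Disjoint B W) (hBR : Disjoint B R) (hWR : Disjoint W R)
    (hB : ∀ a ∈ B, ∀ b ∈ B, ¬ T.G.Adj a b)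
    (hW : ∀ a ∈ W, ∀ b ∈ W, ¬ T.G.Adj a b)
    (hRind : ∀ a ∈ R, ∀ b ∈ R, ¬ T.G.Adj a b)
    (h4 : FourConnected T.G)
    (v : V) (hv : v ∈ W) (n : V) (hnR : n ∈ R) (hn : n ∈ T.G.neighborSet v) :
    InducesStar T.G ((T.G.neighborSet v ∩ B) ∪ {v}) v ∧
    IsPathGraph (T.G.induce (T.G.neighborSet v \ {n})) := by
  refine ⟨⟨Or.inr rfl, ?_, ?_⟩, ?_⟩
  · rintro u (hu | hu) huv
    · exact hu.1
    · exact absurd hu huv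
  · rintro u (hu | hu) w (hw | hw) huv hwv
    · exact hB u hu.2 w hw.2
    · exact absurd hw hwv
    · exact absurd hu huv
    · exact absurd hu huv
  · have hpath := isPathGraph_induce_compl_singleton (PlaneTriangulation.connected_link h4 ⟨n, hn⟩)
      (PlaneTriangulation.ncard_neighborSet_link h4 v) ⟨n, hn⟩
    exact hpath.of_iso (T.G.induceDiffSingletonIso hn)
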